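/- Let d ≥ 1, D := {1,...,d}, let B ⊆ D be nonempty with B' := D \ B. There exists a constant c > 0 depending only on d such that for every Young function Q and every n ≥ m_0 with Q(2^{2n|B|}) ≥ 2^{2n|B|}, the operator norm from L_Q(I^d) to L^1(I^d) satisfies ‖L_{p_n(B)}∘R_{p_n(B')}‖_{L_Q(I^d) → L^1(I^d)} ≥ c · 2^{2n|B|} n^{|B|} / Q(2^{2n|B|}), where p_n(B) denotes the index vector all of whose coordinates equal p_n and the operator norm is sup{ ‖(L_{p_n(B)}∘R_{p_n(B')})(f)‖_{L^1} : ‖f‖_{L_Q} ≤ 1 }. -/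

import Mathlib

open MeasureTheory Filter

noncomputable section

/-- The unit cube `[0,1)^d`. -/
def unitCube (d : ℕ) : Set (Fin d → ℝ) := Set.univ.pi fun _ => Set.Ico (0:ℝ) 1

/-- Lebesgue measure restricted to the unit cube `[0,1)^d`. -/
def cubeMeasure (d : ℕ) : Measure (Fin d → ℝ) := volume.restrict (unitCube d)

/-- The `1`-periodic function equal to `1` on `[0,1/2)` and to `-1` on `[1/2,1)`. -/
def r0 (x : ℝ) : ℝ := if Int.fract x < 1/2 then 1 else -1

/-- The Rademacher functions. -/
def rademacher (n : ℕ) (x : ℝ) : ℝ := r0 (2 ^ n * x)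

/-- The Walsh functions (in Paley enumeration, via binary digits). -/
def walsh (n : ℕ) (x : ℝ) : ℝ :=
  ∏ k ∈ Finset.range (n + 1), if n.testBit k then rademacher k x else 1

/-- The Walsh–Dirichlet kernel `D_n`. -/
def dirichletKernel (n : ℕ) (x : ℝ) : ℝ := ∑ k ∈ Finset.range n, walsh k x

/-- `l_n = ∑_{k=1}^{n-1} 1/k`. -/
def logSum (n : ℕ) : ℝ := ∑ k ∈ Finset.Icc 1 (n - 1), (1 : ℝ) / k

/-- The Nörlund logarithmic kernel `F_n`. -/
def FKernel (n : ℕ) (u : ℝ) : ℝ :=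
  (1 / logSum n) * ∑ i ∈ Finset.Ico 1 n, dirichletKernel (n - i) u / i

/-- The Riesz logarithmic kernel `G_n`. -/
def GKernel (n : ℕ) (u : ℝ) : ℝ :=
  (1 / logSum n) * ∑ i ∈ Finset.Ico 1 n, dirichletKernel i u / i

/-- Walsh–Fourier coefficient of `f` on the unit cube. -/
def walshCoef {d : ℕ} (f : (Fin d → ℝ) → ℝ) (j : Fin d → ℕ) : ℝ :=
  ∫ x, f x * ∏ i, walsh (j i) (x i) ∂(cubeMeasure d)

/-- Rectangular partial sums of the multiple Walsh–Fourier series. -/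
def rectPartialSum {d : ℕ} (f : (Fin d → ℝ) → ℝ) (N : Fin d → ℕ) (x : Fin d → ℝ) : ℝ :=
  ∑ j ∈ Fintype.piFinset (fun i => Finset.range (N i)),
    walshCoef f j * ∏ i, walsh (j i) (x i)

/-- The mixed logarithmic means `(L_{n_B} ∘ R_{n_{B'}})(f)`. -/
def mixedLogMean {d : ℕ} (B : Finset (Fin d)) (f : (Fin d → ℝ) → ℝ)
    (n : Fin d → ℕ) (x : Fin d → ℝ) : ℝ :=
  (∏ j, logSum (n j))⁻¹ *
    ∑ i ∈ Fintype.piFinset (fun j => Finset.Ico 1 (n j)),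
      rectPartialSum f (fun j => if j ∈ B then n j - i j else i j) x / ∏ j, (i j : ℝ)

/-- A Young function: convex, continuous, even, vanishing at `0`, with
`Q(u)/u → ∞` at `+∞` and `Q(u)/u → 0` at `0`. -/
structure YoungFunction where
  toFun : ℝ → ℝ
  nonneg : ∀ u, 0 ≤ toFun u
  convexOn : ConvexOn ℝ Set.univ toFun
  continuous : Continuous toFun
  even : ∀ u, toFun (-u) = toFun u
  map_zero : toFun 0 = 0
  tendsto_atTop : Tendsto (fun u => toFun u / u) atTop atTop
  tendsto_zero : Tendsto (fun u => toFun u / u) (nhdsWithin 0 {(0:ℝ)}ᶜ) (nhds 0)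

/-- The set of admissible constants `k` in the Luxemburg norm of `f`. -/
def orliczSet {d : ℕ} (Q : YoungFunction) (f : (Fin d → ℝ) → ℝ) : Set ℝ :=
  {k | 0 < k ∧ Integrable (fun x => Q.toFun (|f x| / k)) (cubeMeasure d) ∧
    ∫ x, Q.toFun (|f x| / k) ∂(cubeMeasure d) ≤ 1}

/-- `f` belongs to the Orlicz space `L_Q(I^d)`. -/
def MemOrlicz {d : ℕ} (Q : YoungFunction) (f : (Fin d → ℝ) → ℝ) : Prop :=
  Measurable f ∧ (orliczSet Q f).Nonempty

/-- The Luxemburg norm on the Orlicz space `L_Q(I^d)`. -/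
def orliczNorm {d : ℕ} (Q : YoungFunction) (f : (Fin d → ℝ) → ℝ) : ℝ :=
  sInf (orliczSet Q f)

/-- `p_n = 2^{2n} + 2^{2n-2} + ⋯ + 2^0`. -/
def pIdx (n : ℕ) : ℕ := ∑ k ∈ Finset.range (n + 1), 4 ^ k

/-- `m̃ = ⌊ l_{p_{⌊m/2⌋}-1}/16 - 2^15 ⌋`. -/
def mTilde (m : ℕ) : ℤ := ⌊logSum (pIdx (m / 2) - 1) / 16 - 2 ^ 15⌋

/-- `m₀ = min{m : m̃ > 1}`. -/
def m₀ : ℕ := sInf {m : ℕ | 1 < mTilde m}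

/-- The set `Ω_n`. -/
def Omega (n : ℕ) : Set ℝ :=
  ⋃ m ∈ Finset.Icc n (2 * n),
    Set.Ico ((2:ℝ) ^ (-(m:ℤ) - 1) + (2:ℝ) ^ (-(m:ℤ) - mTilde m)) ((2:ℝ) ^ (-(m:ℤ)))

/-- `k`-th binary digit of `x` (the expansion not terminating in `1`'s). -/
def binDigit (k : ℕ) (x : ℝ) : ℕ := (⌊x * 2 ^ (k + 1)⌋).toNat % 2

/-- Dyadic addition on `[0,1)`. -/
def dyadicAdd (x t : ℝ) : ℝ :=
  ∑' k : ℕ, |(binDigit k x : ℝ) - (binDigit k t : ℝ)| / 2 ^ (k + 1)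

/-- Dyadic convolution `f ∗ K` on `[0,1)`. -/
def dyadicConv (f K : ℝ → ℝ) (x : ℝ) : ℝ :=
  ∫ t in Set.Ico (0:ℝ) 1, f t * K (dyadicAdd x t)

/-- Lebesgue measure restricted to `[0,1)`. -/
def unitMeasure : Measure ℝ := volume.restrict (Set.Ico (0:ℝ) 1)

/-- A set `A ⊆ L_Q(I^d)` is nowhere dense w.r.t. the Luxemburg norm. -/
def OrliczNowhereDense {d : ℕ} (Q : YoungFunction) (A : Set ((Fin d → ℝ) → ℝ)) : Prop :=
  ∀ f, MemOrlicz Q f → ∀ ε > 0, ∃ g, MemOrlicz Q g ∧ ∃ δ > 0,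
    (∀ h, MemOrlicz Q h → orliczNorm Q (h - g) < δ → orliczNorm Q (h - f) < ε) ∧
    (∀ h, MemOrlicz Q h → orliczNorm Q (h - g) < δ → h ∉ A)

/-- A set `A ⊆ L_Q(I^d)` is of first Baire category (meager) w.r.t. the Luxemburg norm. -/
def OrliczMeager {d : ℕ} (Q : YoungFunction) (A : Set ((Fin d → ℝ) → ℝ)) : Prop :=
  ∃ F : ℕ → Set ((Fin d → ℝ) → ℝ), (∀ k, OrliczNowhereDense Q (F k)) ∧ A ⊆ ⋃ k, F k

/-!
The extremal function is, up to a scalar, `h = ∏_{j ∈ B} D_{2^{2n+1}}(x_j)`. Because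
`w_k D_{2^m} = D_{2^m}` for `k < 2^m`, its means of index `p_n ≤ 2^{2n+1}` are exactly
`∏_{j ∈ B} F_{p_n}(x_j)`. As `h` has integral `1` and is at most `2^{|B|} M`, where
`M = 2^{2n|B|}`, convexity of `Q` puts `M / Q(M) · 2^{-|B|} h` into the unit ball of `L_Q`.

It remains to see that `‖F_{p_n}‖₁` grows linearly in `n`. Put `p = p_{n-1}` and `s = 2n`, so that
`p_n = 2^s + p`. From `D_{2^s + r} = D_{2^s} + r_s D_r` for `r ≤ 2^s` one gets
`l_{p_n} F_{p_n} = l_{p+1} D_{2^s} + r_s l_p F_p + T`, where `T` collects the Dirichlet kernels of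
index below `2^s`. Summation by parts and `‖K_m‖₁ ≤ 2` for the Fejér kernels give `‖T‖₁ ≤ 16`.
Since `3p < 2^s`, the first term dominates the second by the factor `3` on the support of
`D_{2^s}`, so `‖l_{p_n} F_{p_n}‖₁` exceeds `‖l_p F_p‖₁` by at least `l_p / 3 - 16`. These gains add
up to order `n²`, while `l_{p_n} ≤ 4n`.
-/

/-! ### Walsh functions -/

lemma r0_antiperiodic : Function.Antiperiodic r0 (1 / 2) := by
  intro x
  have hx := Int.floor_add_fract x
  have hx0 := Int.fract_nonneg x
  have hx1 := Int.fract_lt_one x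
  by_cases h : Int.fract x < 1 / 2
  · have hfract : Int.fract (x + 1 / 2) = Int.fract x + 1 / 2 :=
      Int.fract_eq_iff.2 ⟨by linarith, by linarith, ⌊x⌋, by linarith⟩
    rw [r0, r0, hfract, if_neg (by linarith), if_pos h]
  · have hfract : Int.fract (x + 1 / 2) = Int.fract x - 1 / 2 :=
      Int.fract_eq_iff.2 ⟨by linarith, by linarith, ⌊x⌋ + 1, by push_cast; linarith⟩
    rw [r0, r0, hfract, if_pos (by linarith), if_neg h, neg_neg]

lemma rademacher_antiperiodic (k : ℕ) :
    Function.Antiperiodic (rademacher k) (2 ^ (k + 1))⁻¹ := by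
  have h := r0_antiperiodic.const_mul (a := (2 : ℝ) ^ k) (by positivity)
  rwa [show ((2 : ℝ) ^ k)⁻¹ * (1 / 2) = (2 ^ (k + 1))⁻¹ by rw [pow_succ, mul_inv, one_div]] at h

lemma rademacher_periodic_of_lt {s k : ℕ} (hsk : s < k) :
    Function.Periodic (rademacher k) (2 ^ (s + 1))⁻¹ := by
  obtain ⟨e, rfl⟩ := Nat.exists_eq_add_of_lt hsk
  have hperiod : ((2 : ℝ) ^ (s + 1))⁻¹ = (2 ^ e : ℕ) * (2 * (2 ^ (s + e + 1 + 1))⁻¹) := by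
    push_cast
    field
  rw [hperiod]
  exact (rademacher_antiperiodic (s + e + 1)).nat_even_mul_periodic _

lemma rademacher_eq_one_or_eq_neg_one (k : ℕ) (x : ℝ) :
    rademacher k x = 1 ∨ rademacher k x = -1 :=
  ite_eq_or_eq _ _ _

lemma abs_rademacher (k : ℕ) (x : ℝ) : |rademacher k x| = 1 :=
  (abs_eq zero_le_one).2 (rademacher_eq_one_or_eq_neg_one k x)

lemma rademacher_mul_self (k : ℕ) (x : ℝ) : rademacher k x * rademacher k x = 1 :=
  mul_self_eq_one_iff.2 (rademacher_eq_one_or_eq_neg_one k x)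

lemma measurable_rademacher (k : ℕ) : Measurable (rademacher k) :=
  Measurable.ite (measurableSet_lt (by fun_prop) measurable_const) measurable_const
    measurable_const

lemma measurable_walsh (n : ℕ) : Measurable (walsh n) := by
  refine Finset.measurable_fun_prod _ fun k _ => ?_
  split_ifs
  exacts [measurable_rademacher k, measurable_const]

lemma abs_walsh (n : ℕ) (x : ℝ) : |walsh n x| = 1 := by
  rw [walsh, Finset.abs_prod]
  refine Finset.prod_eq_one fun k _ => ?_
  split_ifs
  exacts [abs_rademacher k x, abs_one]

lemma walsh_eq_prod_range {n K : ℕ} (h : n < 2 ^ K) (x : ℝ) :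
    walsh n x = ∏ k ∈ Finset.range K, if n.testBit k then rademacher k x else 1 := by
  have prod_range_eq {A C : ℕ} (hA : n < 2 ^ A) (hAC : A ≤ C) :
      (∏ k ∈ Finset.range A, if n.testBit k then rademacher k x else 1)
        = ∏ k ∈ Finset.range C, if n.testBit k then rademacher k x else 1 := by
    refine Finset.prod_subset (Finset.range_mono hAC) fun k _ hk => ?_
    have hAk : A ≤ k := by simpa using hk
    simp [Nat.testBit_lt_two_pow (hA.trans_le (Nat.pow_le_pow_right two_pos hAk))]
  have hn : n < 2 ^ (n + 1) := (Nat.lt_succ_self n).trans Nat.lt_two_pow_self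
  rcases le_total (n + 1) K with hK | hK
  exacts [prod_range_eq hn hK, (prod_range_eq h hK).symm]

lemma walsh_zero (x : ℝ) : walsh 0 x = 1 := by
  simp [walsh]

lemma walsh_two_pow_add {s j : ℕ} (h : j < 2 ^ s) (x : ℝ) :
    walsh (2 ^ s + j) x = rademacher s x * walsh j x := by
  rw [walsh_eq_prod_range (K := s + 1) (by rw [pow_succ]; omega), walsh_eq_prod_range h,
    Finset.prod_range_succ, mul_comm]
  congr 1
  · simp [Nat.testBit_two_pow_add_eq, Nat.testBit_lt_two_pow h]
  · refine Finset.prod_congr rfl fun k hk => ?_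
    rw [Nat.testBit_two_pow_add_gt (Finset.mem_range.1 hk)]

lemma walsh_antiperiodic {n s : ℕ} (hs : n.testBit s) (hmin : ∀ k < s, ¬ n.testBit k) :
    Function.Antiperiodic (walsh n) (2 ^ (s + 1))⁻¹ := by
  intro x
  have hs_mem : s ∈ Finset.range (n + 1) :=
    Finset.mem_range.2
      (Nat.lt_succ_of_lt (Nat.lt_two_pow_self.trans_le (Nat.ge_two_pow_of_testBit hs)))
  rw [walsh, walsh, ← Finset.mul_prod_erase _ _ hs_mem, ← Finset.mul_prod_erase _ _ hs_mem,
    if_pos hs, if_pos hs, ← neg_mul, rademacher_antiperiodic s x]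
  congr 1
  refine Finset.prod_congr rfl fun k hk => ?_
  split_ifs with hk_bit
  · have hsk : s < k :=
      lt_of_le_of_ne (not_lt.1 fun hks => hmin k hks hk_bit) (Finset.ne_of_mem_erase hk).symm
    exact rademacher_periodic_of_lt hsk x
  · rfl

lemma intervalIntegral_eq_zero_of_periodic_of_antiperiodic {E : Type*} [NormedAddCommGroup E]
    [NormedSpace ℝ E] {f : ℝ → E} {T c : ℝ} (hT : Function.Periodic f T)
    (hc : Function.Antiperiodic f c) (a : ℝ) : ∫ x in a..a + T, f x = 0 := by
  have := IsAddTorsionFree.of_isTorsionFree ℝ E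
  refine self_eq_neg.1 ?_
  calc ∫ x in a..a + T, f x = ∫ x in a + c..a + c + T, f x := hT.intervalIntegral_add_eq _ _
    _ = ∫ x in a..a + T, f (x + c) := by
      rw [intervalIntegral.integral_comp_add_right, add_right_comm]
    _ = -∫ x in a..a + T, f x := by simp only [hc _, intervalIntegral.integral_neg]

instance : IsProbabilityMeasure unitMeasure := ⟨by simp [unitMeasure]⟩

lemma integrable_walsh (n : ℕ) : Integrable (walsh n) unitMeasure :=
  .of_bound (measurable_walsh n).aestronglyMeasurable 1
    (.of_forall fun x => by rw [Real.norm_eq_abs, abs_walsh])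

lemma integral_walsh {n : ℕ} (hn : n ≠ 0) : ∫ x, walsh n x ∂unitMeasure = 0 := by
  have hbit : ∃ s, n.testBit s := Nat.exists_testBit_of_ne_zero hn
  have hanti := walsh_antiperiodic (Nat.find_spec hbit) fun _ => Nat.find_min hbit
  have hper : Function.Periodic (walsh n) 1 := by
    have hperiod : (1 : ℝ) = (2 ^ Nat.find hbit : ℕ) * (2 * (2 ^ (Nat.find hbit + 1))⁻¹) := by
      push_cast
      field
    rw [hperiod]
    exact hanti.nat_even_mul_periodic _
  rw [unitMeasure, integral_Ico_eq_integral_Ioc, ← intervalIntegral.integral_of_le zero_le_one]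
  simpa using intervalIntegral_eq_zero_of_periodic_of_antiperiodic hper hanti 0

/-! ### Dirichlet kernels -/

lemma dirichletKernel_zero (x : ℝ) : dirichletKernel 0 x = 0 := by
  simp [dirichletKernel]

lemma dirichletKernel_one (x : ℝ) : dirichletKernel 1 x = 1 := by
  simp [dirichletKernel, walsh_zero]

lemma measurable_dirichletKernel (n : ℕ) : Measurable (dirichletKernel n) :=
  Finset.measurable_fun_sum _ fun k _ => measurable_walsh k

lemma integrable_dirichletKernel (n : ℕ) : Integrable (dirichletKernel n) unitMeasure :=
  integrable_finsetSum _ fun k _ => integrable_walsh k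

lemma integral_dirichletKernel {n : ℕ} (hn : n ≠ 0) :
    ∫ x, dirichletKernel n x ∂unitMeasure = 1 := by
  unfold dirichletKernel
  rw [integral_finsetSum _ fun k _ => integrable_walsh k,
    Finset.sum_eq_single_of_mem 0 (Finset.mem_range.2 (Nat.pos_of_ne_zero hn))
      fun k _ hk => integral_walsh hk]
  simp [walsh_zero]

lemma abs_dirichletKernel_le (n : ℕ) (x : ℝ) : |dirichletKernel n x| ≤ n := by
  refine (Finset.abs_sum_le_sum_abs _ _).trans ?_
  simp [abs_walsh]

lemma dirichletKernel_two_pow_add {s r : ℕ} (h : r ≤ 2 ^ s) (x : ℝ) :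
    dirichletKernel (2 ^ s + r) x
      = dirichletKernel (2 ^ s) x + rademacher s x * dirichletKernel r x := by
  simp only [dirichletKernel]
  rw [Finset.sum_range_add, Finset.mul_sum]
  congr 1
  exact Finset.sum_congr rfl fun k hk =>
    walsh_two_pow_add ((Finset.mem_range.1 hk).trans_le h) x

lemma dirichletKernel_two_pow_succ (s : ℕ) (x : ℝ) :
    dirichletKernel (2 ^ (s + 1)) x = (1 + rademacher s x) * dirichletKernel (2 ^ s) x := by
  rw [pow_succ, mul_two, dirichletKernel_two_pow_add le_rfl]
  ring

lemma dirichletKernel_two_pow_eq_zero_or (s : ℕ) (x : ℝ) :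
    dirichletKernel (2 ^ s) x = 0 ∨ dirichletKernel (2 ^ s) x = 2 ^ s := by
  induction s with
  | zero => exact .inr (by rw [pow_zero, pow_zero, dirichletKernel_one])
  | succ s ih =>
    rw [dirichletKernel_two_pow_succ]
    rcases rademacher_eq_one_or_eq_neg_one s x with hr | hr
    · refine ih.imp (fun hD => by rw [hD, mul_zero]) fun hD => ?_
      rw [hr, hD]
      ring
    · exact .inl (by rw [hr]; ring)

lemma dirichletKernel_two_pow_nonneg (s : ℕ) (x : ℝ) : 0 ≤ dirichletKernel (2 ^ s) x := by
  rcases dirichletKernel_two_pow_eq_zero_or s x with h | h <;> rw [h]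
  positivity

lemma walsh_mul_dirichletKernel_two_pow {s j : ℕ} (hj : j < 2 ^ s) (x : ℝ) :
    walsh j x * dirichletKernel (2 ^ s) x = dirichletKernel (2 ^ s) x := by
  induction s generalizing j with
  | zero => rw [Nat.lt_one_iff.1 hj, walsh_zero, one_mul]
  | succ s ih =>
    rw [dirichletKernel_two_pow_succ]
    rcases lt_or_ge j (2 ^ s) with hjs | hjs
    · rw [mul_left_comm, ih hjs]
    · obtain ⟨i, rfl⟩ := Nat.exists_eq_add_of_le hjs
      have hi : i < 2 ^ s := by rw [pow_succ] at hj; omega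
      calc walsh (2 ^ s + i) x * ((1 + rademacher s x) * dirichletKernel (2 ^ s) x)
          = (rademacher s x + rademacher s x * rademacher s x)
              * (walsh i x * dirichletKernel (2 ^ s) x) := by rw [walsh_two_pow_add hi]; ring
        _ = (1 + rademacher s x) * dirichletKernel (2 ^ s) x := by
          rw [rademacher_mul_self, ih hi, add_comm]

/-! ### Fejér sums -/

/-- The unnormalised Walsh–Fejér kernel `D_0 + ⋯ + D_{n-1}`, through which summation by parts
controls weighted sums of Dirichlet kernels. -/
def fejerSum (n : ℕ) (x : ℝ) : ℝ := ∑ k ∈ Finset.range n, dirichletKernel k x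

lemma integrable_fejerSum (n : ℕ) : Integrable (fejerSum n) unitMeasure :=
  integrable_finsetSum _ fun k _ => integrable_dirichletKernel k

lemma fejerSum_two_pow_add {s r : ℕ} (h : r ≤ 2 ^ s) (x : ℝ) :
    fejerSum (2 ^ s + r) x
      = fejerSum (2 ^ s) x + (r * dirichletKernel (2 ^ s) x + rademacher s x * fejerSum r x) := by
  simp only [fejerSum]
  rw [Finset.sum_range_add, Finset.sum_congr rfl fun k hk =>
      dirichletKernel_two_pow_add ((Finset.mem_range.1 hk).le.trans h) x,
    Finset.sum_add_distrib, Finset.mul_sum, Finset.sum_const, Finset.card_range, nsmul_eq_mul]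

lemma fejerSum_two_pow_nonneg (s : ℕ) (x : ℝ) : 0 ≤ fejerSum (2 ^ s) x := by
  induction s with
  | zero => simp [fejerSum, dirichletKernel_zero]
  | succ s ih =>
    have hD : 0 ≤ ((2 ^ s : ℕ) : ℝ) * dirichletKernel (2 ^ s) x :=
      mul_nonneg (Nat.cast_nonneg _) (dirichletKernel_two_pow_nonneg s x)
    rw [pow_succ, mul_two, fejerSum_two_pow_add le_rfl]
    rcases rademacher_eq_one_or_eq_neg_one s x with hr | hr <;> rw [hr] <;> linarith

lemma integral_abs_fejerSum_two_pow_le (s : ℕ) :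
    ∫ x, |fejerSum (2 ^ s) x| ∂unitMeasure ≤ 2 ^ s := by
  have integral_le_one (k : ℕ) : ∫ x, dirichletKernel k x ∂unitMeasure ≤ 1 := by
    rcases eq_or_ne k 0 with rfl | hk
    · simp [dirichletKernel_zero]
    · exact (integral_dirichletKernel hk).le
  calc ∫ x, |fejerSum (2 ^ s) x| ∂unitMeasure
      = ∑ k ∈ Finset.range (2 ^ s), ∫ x, dirichletKernel k x ∂unitMeasure := by
        simp only [abs_of_nonneg (fejerSum_two_pow_nonneg s _)]
        exact integral_finsetSum _ fun k _ => integrable_dirichletKernel k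
    _ ≤ ∑ _k ∈ Finset.range (2 ^ s), (1 : ℝ) := Finset.sum_le_sum fun k _ => integral_le_one k
    _ = 2 ^ s := by simp

lemma integral_abs_fejerSum_two_pow_add_le {s r : ℕ} (h : r ≤ 2 ^ s) :
    ∫ x, |fejerSum (2 ^ s + r) x| ∂unitMeasure
      ≤ 2 ^ s + (r + ∫ x, |fejerSum r x| ∂unitMeasure) := by
  have hbound (x : ℝ) : |fejerSum (2 ^ s + r) x| ≤
      |fejerSum (2 ^ s) x| + (r * dirichletKernel (2 ^ s) x + |fejerSum r x|) := by
    have hD : 0 ≤ r * dirichletKernel (2 ^ s) x :=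
      mul_nonneg (Nat.cast_nonneg _) (dirichletKernel_two_pow_nonneg s x)
    calc |fejerSum (2 ^ s + r) x|
        ≤ |fejerSum (2 ^ s) x|
            + (|r * dirichletKernel (2 ^ s) x| + |rademacher s x * fejerSum r x|) := by
          rw [fejerSum_two_pow_add h]
          exact (abs_add_le _ _).trans (add_le_add_right (abs_add_le _ _) _)
      _ = _ := by rw [abs_of_nonneg hD, abs_mul, abs_rademacher, one_mul]
  have hpow := (integrable_fejerSum (2 ^ s)).abs
  have hD := (integrable_dirichletKernel (2 ^ s)).const_mul (r : ℝ)
  have hr := (integrable_fejerSum r).abs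
  have hDr : Integrable (fun x => r * dirichletKernel (2 ^ s) x + |fejerSum r x|) unitMeasure :=
    hD.add hr
  calc ∫ x, |fejerSum (2 ^ s + r) x| ∂unitMeasure
      ≤ ∫ x, |fejerSum (2 ^ s) x| + (r * dirichletKernel (2 ^ s) x + |fejerSum r x|)
          ∂unitMeasure :=
        integral_mono (integrable_fejerSum _).abs (hpow.add hDr) hbound
    _ = ∫ x, |fejerSum (2 ^ s) x| ∂unitMeasure + (r + ∫ x, |fejerSum r x| ∂unitMeasure) := by
        rw [integral_add hpow hDr, integral_add hD hr, integral_const_mul,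
          integral_dirichletKernel (by positivity), mul_one]
    _ ≤ _ := add_le_add_left (integral_abs_fejerSum_two_pow_le s) _

lemma integral_abs_fejerSum_le (n : ℕ) : ∫ x, |fejerSum n x| ∂unitMeasure ≤ 2 * n := by
  induction n using Nat.strong_induction_on with
  | _ n ih =>
    rcases eq_or_ne n 0 with rfl | hn
    · simp [fejerSum]
    obtain ⟨r, hr⟩ := Nat.exists_eq_add_of_le (Nat.pow_log_le_self 2 hn)
    have hlt : n < 2 ^ (Nat.log 2 n + 1) := Nat.lt_pow_succ_log_self one_lt_two n
    have hpos : 0 < 2 ^ Nat.log 2 n := by positivity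
    generalize Nat.log 2 n = s at hr hlt hpos
    subst hr
    have hrs : r ≤ 2 ^ s := by rw [pow_succ] at hlt; omega
    have hrs_real : (r : ℝ) ≤ 2 ^ s := by exact_mod_cast hrs
    have hstep := integral_abs_fejerSum_two_pow_add_le hrs
    have hrest := ih r (by omega)
    push_cast
    linarith

lemma abs_sum_range_mul_le_of_monotoneOn {a g : ℕ → ℝ} {n : ℕ} (ha₀ : 0 ≤ a 0)
    (ha : MonotoneOn a (Set.Iic (n - 1))) :
    |∑ k ∈ Finset.range n, a k * g k| ≤ a (n - 1) * |∑ i ∈ Finset.range n, g i|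
      + ∑ k ∈ Finset.range (n - 1), (a (k + 1) - a k) * |∑ i ∈ Finset.range (k + 1), g i| := by
  have by_parts := Finset.sum_range_by_parts a g n
  simp only [smul_eq_mul] at by_parts
  rw [by_parts]
  refine (abs_sub _ _).trans (add_le_add ?_ ?_)
  · rw [abs_mul, abs_of_nonneg (ha₀.trans (ha (Nat.zero_le _) Set.self_mem_Iic (Nat.zero_le _)))]
  · refine (Finset.abs_sum_le_sum_abs _ _).trans (Finset.sum_le_sum fun k hk => ?_)
    have hk' := Finset.mem_range.1 hk
    rw [abs_mul, abs_of_nonneg (sub_nonneg.2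
      (ha (Set.mem_Iic.2 (by omega)) (Set.mem_Iic.2 (by omega)) k.le_succ))]

lemma integral_abs_sum_mul_le_of_monotoneOn {α : Type*} [MeasurableSpace α] {μ : Measure α}
    {g : ℕ → α → ℝ} {a : ℕ → ℝ} {n : ℕ} {C : ℝ} (hg : ∀ k, Integrable (g k) μ)
    (hC : ∀ m ≤ n, ∫ x, |∑ k ∈ Finset.range m, g k x| ∂μ ≤ C)
    (ha₀ : 0 ≤ a 0) (ha : MonotoneOn a (Set.Iic (n - 1))) :
    ∫ x, |∑ k ∈ Finset.range n, a k * g k x| ∂μ ≤ 2 * C * a (n - 1) := by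
  let G (m : ℕ) (x : α) : ℝ := |∑ k ∈ Finset.range m, g k x|
  have integrable_G (m : ℕ) : Integrable (G m) μ :=
    (integrable_finsetSum _ fun k _ => hg k).abs
  have hC₀ : 0 ≤ C := by simpa using hC 0 n.zero_le
  have hlast : 0 ≤ a (n - 1) := ha₀.trans (ha (Nat.zero_le _) Set.self_mem_Iic (Nat.zero_le _))
  have hint : ∀ k ∈ Finset.range (n - 1), Integrable (fun x => (a (k + 1) - a k) * G (k + 1) x) μ :=
    fun k _ => (integrable_G _).const_mul _
  calc ∫ x, |∑ k ∈ Finset.range n, a k * g k x| ∂μ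
      ≤ ∫ x, a (n - 1) * G n x
          + ∑ k ∈ Finset.range (n - 1), (a (k + 1) - a k) * G (k + 1) x ∂μ :=
        integral_mono (integrable_finsetSum _ fun k _ => (hg k).const_mul _).abs
          (((integrable_G n).const_mul _).add (integrable_finsetSum _ hint))
          fun _ => abs_sum_range_mul_le_of_monotoneOn ha₀ ha
    _ = a (n - 1) * ∫ x, G n x ∂μ
          + ∑ k ∈ Finset.range (n - 1), (a (k + 1) - a k) * ∫ x, G (k + 1) x ∂μ := by
        rw [integral_add ((integrable_G n).const_mul _) (integrable_finsetSum _ hint),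
          integral_finsetSum _ hint]
        simp only [integral_const_mul]
    _ ≤ a (n - 1) * C + ∑ k ∈ Finset.range (n - 1), (a (k + 1) - a k) * C := by
        refine add_le_add (mul_le_mul_of_nonneg_left (hC n le_rfl) hlast)
          (Finset.sum_le_sum fun k hk => ?_)
        have hk' := Finset.mem_range.1 hk
        exact mul_le_mul_of_nonneg_left (hC _ (by omega)) (sub_nonneg.2
          (ha (Set.mem_Iic.2 (by omega)) (Set.mem_Iic.2 (by omega)) k.le_succ))
    _ = 2 * C * a (n - 1) - a 0 * C := by
        rw [← Finset.sum_mul, Finset.sum_range_sub]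
        ring
    _ ≤ 2 * C * a (n - 1) := sub_le_self _ (mul_nonneg ha₀ hC₀)

/-! ### Nörlund logarithmic kernels -/

lemma logSum_eq_sum_Ico (n : ℕ) : logSum n = ∑ k ∈ Finset.Ico 1 n, (1 : ℝ) / k := by
  refine Finset.sum_congr (Finset.ext fun k => ?_) fun _ _ => rfl
  simp only [Finset.mem_Icc, Finset.mem_Ico]
  omega

lemma logSum_eq_harmonic (n : ℕ) : logSum n = harmonic (n - 1) := by
  simp [logSum, harmonic_eq_sum_Icc]

lemma logSum_mono : Monotone logSum := fun a b h => by
  rw [logSum_eq_sum_Ico, logSum_eq_sum_Ico]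
  exact Finset.sum_le_sum_of_subset_of_nonneg (Finset.Ico_subset_Ico_right h)
    fun _ _ _ => by positivity

lemma logSum_nonneg (n : ℕ) : 0 ≤ logSum n :=
  Finset.sum_nonneg fun _ _ => by positivity

lemma logSum_pos {n : ℕ} (hn : 2 ≤ n) : 0 < logSum n :=
  calc (0 : ℝ) < logSum 2 := by norm_num [logSum]
    _ ≤ logSum n := logSum_mono hn

/-- The Nörlund logarithmic kernel without its normalising factor, `l_n F_n`; unlike `F_n` it
satisfies an exact recursion along `n = 2^s + p`. -/
def norlundSum (n : ℕ) (x : ℝ) : ℝ := ∑ i ∈ Finset.Ico 1 n, dirichletKernel (n - i) x / i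

/-- The part of `norlundSum (2^s + p)` built from the Dirichlet kernels of index below `2^s`. -/
def norlundTail (s p : ℕ) (x : ℝ) : ℝ :=
  ∑ k ∈ Finset.range (2 ^ s), 1 / ((2 ^ s + p : ℝ) - k) * dirichletKernel k x

lemma FKernel_eq_div (n : ℕ) (x : ℝ) : FKernel n x = norlundSum n x / logSum n := by
  rw [FKernel, one_div_mul_eq_div, norlundSum]

lemma integrable_norlundSum (n : ℕ) : Integrable (norlundSum n) unitMeasure :=
  integrable_finsetSum _ fun _ _ => (integrable_dirichletKernel _).div_const _

lemma integrable_norlundTail (s p : ℕ) : Integrable (norlundTail s p) unitMeasure :=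
  integrable_finsetSum _ fun k _ => (integrable_dirichletKernel k).const_mul _

lemma integral_norlundSum (n : ℕ) : ∫ x, norlundSum n x ∂unitMeasure = logSum n := by
  unfold norlundSum
  rw [integral_finsetSum _ fun _ _ => (integrable_dirichletKernel _).div_const _,
    logSum_eq_sum_Ico]
  refine Finset.sum_congr rfl fun i hi => ?_
  have hlt := (Finset.mem_Ico.1 hi).2
  rw [integral_div, integral_dirichletKernel (by omega)]

lemma abs_norlundSum_le (n : ℕ) (x : ℝ) : |norlundSum n x| ≤ n * logSum n := by
  rw [logSum_eq_sum_Ico, Finset.mul_sum]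
  refine (Finset.abs_sum_le_sum_abs _ _).trans (Finset.sum_le_sum fun i _ => ?_)
  rw [abs_div, Nat.abs_cast, mul_one_div]
  gcongr
  exact (abs_dirichletKernel_le _ x).trans (by exact_mod_cast Nat.sub_le n i)

lemma sum_Ico_dirichletKernel_sub_div_eq_norlundTail (s p : ℕ) (x : ℝ) :
    ∑ i ∈ Finset.Ico (p + 1) (2 ^ s + p), dirichletKernel (2 ^ s + p - i) x / i
      = norlundTail s p x := by
  have hpos : 0 < 2 ^ s := by positivity
  rw [norlundTail, Finset.range_eq_Ico, Finset.sum_eq_sum_Ico_succ_bot hpos,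
    dirichletKernel_zero, mul_zero, zero_add]
  refine Finset.sum_nbij' (fun i => 2 ^ s + p - i) (fun k => 2 ^ s + p - k)
    ?_ ?_ ?_ ?_ fun i hi => ?_
  iterate 4
    · intro i hi
      simp only [Finset.mem_Ico] at hi ⊢
      omega
  · have hcast : ((2 ^ s + p - i : ℕ) : ℝ) = 2 ^ s + p - i := by
      rw [Nat.cast_sub (Finset.mem_Ico.1 hi).2.le]
      push_cast
      rfl
    rw [hcast, sub_sub_cancel, one_div_mul_eq_div]

lemma norlundSum_two_pow_add {s p : ℕ} (hp : 1 ≤ p) (hps : p ≤ 2 ^ s) (x : ℝ) :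
    norlundSum (2 ^ s + p) x
      = (logSum (p + 1) * dirichletKernel (2 ^ s) x + rademacher s x * norlundSum p x)
        + norlundTail s p x := by
  have hpos : 0 < 2 ^ s := by positivity
  have hextend : norlundSum p x = ∑ i ∈ Finset.Ico 1 (p + 1), dirichletKernel (p - i) x / i := by
    simp [norlundSum, Finset.sum_Ico_succ_top hp, dirichletKernel_zero]
  rw [norlundSum, ← Finset.sum_Ico_consecutive _ (show 1 ≤ p + 1 by omega)
    (show p + 1 ≤ 2 ^ s + p by omega), sum_Ico_dirichletKernel_sub_div_eq_norlundTail,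
    hextend, logSum_eq_sum_Ico, Finset.sum_mul, Finset.mul_sum, ← Finset.sum_add_distrib]
  congr 1
  refine Finset.sum_congr rfl fun i hi => ?_
  have hip := (Finset.mem_Ico.1 hi).2
  rw [show 2 ^ s + p - i = 2 ^ s + (p - i) by omega, dirichletKernel_two_pow_add (by omega)]
  ring

lemma integral_abs_norlundTail_le {s p : ℕ} (hps : 2 ^ s ≤ 4 * p) :
    ∫ x, |norlundTail s p x| ∂unitMeasure ≤ 16 := by
  have hpos : (0 : ℝ) < 2 ^ s := by positivity
  have hps_real : (2 : ℝ) ^ s ≤ 4 * p := by exact_mod_cast hps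
  have hlast : ((2 ^ s - 1 : ℕ) : ℝ) = 2 ^ s - 1 := by
    rw [Nat.cast_sub Nat.one_le_two_pow]
    push_cast
    rfl
  have hfejer : ∀ m ≤ 2 ^ s, ∫ x, |fejerSum m x| ∂unitMeasure ≤ 2 * 2 ^ s := fun m hm =>
    (integral_abs_fejerSum_le m).trans (by gcongr; exact_mod_cast hm)
  refine (integral_abs_sum_mul_le_of_monotoneOn (a := fun k => 1 / ((2 ^ s + p : ℝ) - k))
    integrable_dirichletKernel hfejer ?_ ?_).trans ?_
  · rw [Nat.cast_zero, sub_zero]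
    positivity
  · intro j _ k hk hjk
    have hk_real : (k : ℝ) ≤ (2 ^ s - 1 : ℕ) := by exact_mod_cast hk
    have hjk_real : (j : ℝ) ≤ k := by exact_mod_cast hjk
    exact one_div_le_one_div_of_le (by linarith) (by linarith)
  · rw [hlast, mul_one_div, div_le_iff₀ (by linarith)]
    linarith

/-- Since `|norlundSum p| ≤ p l_p`, on the support of `D_{2^s}`, where `D_{2^s} = 2^s ≥ 3p`, the
term `l_{p+1} D_{2^s}` beats `r_s * norlundSum p` by the factor `3`; off the support there is no
interference. -/
lemma abs_norlundSum_add_le {s p : ℕ} (hp : 1 ≤ p) (hps : 3 * p ≤ 2 ^ s) (x : ℝ) :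
    |norlundSum p x| + logSum (p + 1) / 3 * dirichletKernel (2 ^ s) x
      ≤ |norlundSum (2 ^ s + p) x| + |norlundTail s p x| := by
  have habs : |rademacher s x * norlundSum p x| = |norlundSum p x| := by
    rw [abs_mul, abs_rademacher, one_mul]
  have hmain : |logSum (p + 1) * dirichletKernel (2 ^ s) x + rademacher s x * norlundSum p x|
      ≤ |norlundSum (2 ^ s + p) x| + |norlundTail s p x| := by
    rw [eq_sub_of_add_eq (norlundSum_two_pow_add hp (by omega) x).symm]
    exact abs_sub _ _
  refine le_trans ?_ hmain
  rcases dirichletKernel_two_pow_eq_zero_or s x with hD | hD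
  · rw [hD, mul_zero, mul_zero, add_zero, zero_add, habs]
  · have hps_real : (3 : ℝ) * p ≤ 2 ^ s := by exact_mod_cast hps
    have hdom : 3 * |norlundSum p x| ≤ logSum (p + 1) * 2 ^ s :=
      calc 3 * |norlundSum p x| ≤ logSum p * (3 * p) := by linarith [abs_norlundSum_le p x]
        _ ≤ logSum (p + 1) * 2 ^ s :=
          mul_le_mul (logSum_mono p.le_succ) hps_real (by positivity) (logSum_nonneg _)
    have htri := abs_sub_abs_le_abs_sub (logSum (p + 1) * 2 ^ s)
      (-(rademacher s x * norlundSum p x))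
    rw [abs_neg, habs, sub_neg_eq_add] at htri
    rw [hD]
    linarith [le_abs_self (logSum (p + 1) * 2 ^ s)]

lemma integral_abs_norlundSum_add_le {s p : ℕ} (hp : 1 ≤ p) (hps : 3 * p ≤ 2 ^ s)
    (hps' : 2 ^ s ≤ 4 * p) :
    ∫ x, |norlundSum p x| ∂unitMeasure + logSum p / 3
      ≤ ∫ x, |norlundSum (2 ^ s + p) x| ∂unitMeasure + 16 := by
  have hp_int := (integrable_norlundSum p).abs
  have hD_int := (integrable_dirichletKernel (2 ^ s)).const_mul (logSum (p + 1) / 3)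
  have hsum_int := (integrable_norlundSum (2 ^ s + p)).abs
  have htail_int := (integrable_norlundTail s p).abs
  calc ∫ x, |norlundSum p x| ∂unitMeasure + logSum p / 3
      ≤ ∫ x, |norlundSum p x| ∂unitMeasure + logSum (p + 1) / 3 := by
        gcongr
        exact logSum_mono p.le_succ
    _ = ∫ x, |norlundSum p x| + logSum (p + 1) / 3 * dirichletKernel (2 ^ s) x ∂unitMeasure := by
        rw [integral_add hp_int hD_int, integral_const_mul,
          integral_dirichletKernel (by positivity), mul_one]
    _ ≤ ∫ x, |norlundSum (2 ^ s + p) x| + |norlundTail s p x| ∂unitMeasure :=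
        integral_mono (hp_int.add hD_int) (hsum_int.add htail_int) (abs_norlundSum_add_le hp hps)
    _ ≤ ∫ x, |norlundSum (2 ^ s + p) x| ∂unitMeasure + 16 := by
        rw [integral_add hsum_int htail_int]
        gcongr
        exact integral_abs_norlundTail_le hps'

lemma integral_abs_FKernel (n : ℕ) :
    ∫ x, |FKernel n x| ∂unitMeasure = (∫ x, |norlundSum n x| ∂unitMeasure) / logSum n := by
  simp only [FKernel_eq_div, abs_div, abs_of_nonneg (logSum_nonneg n), integral_div]

/-! ### The indices `p_n` -/

lemma pIdx_succ (n : ℕ) : pIdx (n + 1) = 2 ^ (2 * (n + 1)) + pIdx n := by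
  rw [pIdx, Finset.sum_range_succ, ← pIdx, pow_mul, add_comm]
  rfl

lemma three_mul_pIdx_add_one (n : ℕ) : 3 * pIdx n + 1 = 2 ^ (2 * (n + 1)) := by
  induction n with
  | zero => rfl
  | succ n ih =>
    rw [pIdx_succ, show 2 * (n + 1 + 1) = 2 * (n + 1) + 2 by ring, pow_add]
    omega

lemma two_pow_le_pIdx (n : ℕ) : 2 ^ (2 * n) ≤ pIdx n := by
  have h := three_mul_pIdx_add_one n
  rw [mul_add_one, pow_add] at h
  omega

lemma pIdx_le_two_pow (n : ℕ) : pIdx n ≤ 2 ^ (2 * n + 1) := by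
  have h := three_mul_pIdx_add_one n
  rw [mul_add_one, pow_add] at h
  rw [pow_succ]
  omega

lemma one_le_pIdx (n : ℕ) : 1 ≤ pIdx n := Nat.one_le_two_pow.trans (two_pow_le_pIdx n)

lemma two_le_pIdx {n : ℕ} (hn : 1 ≤ n) : 2 ≤ pIdx n :=
  calc 2 = 2 ^ 1 := rfl
    _ ≤ 2 ^ (2 * n) := Nat.pow_le_pow_right two_pos (by omega)
    _ ≤ pIdx n := two_pow_le_pIdx n

lemma le_logSum_pIdx (n : ℕ) : (n : ℝ) ≤ logSum (pIdx n) := by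
  have hlog := log_add_one_le_harmonic (pIdx n - 1)
  rw [Nat.sub_add_cancel (one_le_pIdx n), ← logSum_eq_harmonic] at hlog
  calc (n : ℝ) ≤ (2 * n : ℕ) * Real.log 2 := by
        push_cast
        nlinarith [Real.log_two_gt_d9, n.cast_nonneg (α := ℝ)]
    _ = Real.log (2 ^ (2 * n)) := (Real.log_pow _ _).symm
    _ ≤ Real.log (pIdx n) :=
        Real.log_le_log (by positivity) (by exact_mod_cast two_pow_le_pIdx n)
    _ ≤ logSum (pIdx n) := hlog

lemma logSum_pIdx_le {n : ℕ} (hn : 1 ≤ n) : logSum (pIdx n) ≤ 4 * n := by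
  have hn_real : (1 : ℝ) ≤ n := by exact_mod_cast hn
  have hpos : 0 < pIdx n - 1 := by have := two_le_pIdx hn; omega
  have hle : pIdx n - 1 ≤ 2 ^ (2 * n + 1) := (Nat.sub_le _ _).trans (pIdx_le_two_pow n)
  calc logSum (pIdx n) = harmonic (pIdx n - 1) := logSum_eq_harmonic _
    _ ≤ 1 + Real.log (pIdx n - 1 : ℕ) := harmonic_le_one_add_log _
    _ ≤ 1 + Real.log (2 ^ (2 * n + 1)) := by
        gcongr
        exact_mod_cast hle
    _ = 1 + (2 * n + 1) * Real.log 2 := by rw [Real.log_pow]; push_cast; rfl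
    _ ≤ 4 * n := by nlinarith [Real.log_two_lt_d9]

lemma le_integral_abs_norlundSum_pIdx (n : ℕ) :
    (n * (n - 97) / 6 : ℝ) ≤ ∫ x, |norlundSum (pIdx n) x| ∂unitMeasure := by
  induction n with
  | zero => simpa using integral_nonneg fun x => abs_nonneg (norlundSum (pIdx 0) x)
  | succ n ih =>
    have hp := three_mul_pIdx_add_one n
    have hp₁ := one_le_pIdx n
    have hstep := integral_abs_norlundSum_add_le (s := 2 * (n + 1)) hp₁ (by omega) (by omega)
    rw [← pIdx_succ] at hstep
    push_cast
    linarith [le_logSum_pIdx n]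

/-- The quadratic growth of `∫ |l_{p_n} F_{p_n}|` gives this for `n ≥ 97`, and `∫ F_{p_n} = 1`
for smaller `n`. -/
lemma div_le_integral_abs_FKernel_pIdx {n : ℕ} (hn : 1 ≤ n) :
    (n / 121 : ℝ) ≤ ∫ x, |FKernel (pIdx n) x| ∂unitMeasure := by
  have hlog_pos := logSum_pos (two_le_pIdx hn)
  have hlog_le : logSum (pIdx n) ≤ ∫ x, |norlundSum (pIdx n) x| ∂unitMeasure := by
    rw [← integral_norlundSum]
    exact (le_abs_self _).trans abs_integral_le_integral_abs
  rw [integral_abs_FKernel, le_div_iff₀ hlog_pos]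
  rcases le_total (n : ℝ) 97 with hsmall | hlarge
  · nlinarith
  · nlinarith [le_integral_abs_norlundSum_pIdx n, logSum_pIdx_le hn]

lemma m₀_pos : 0 < m₀ := by
  have exists_mTilde : {m : ℕ | 1 < mTilde m}.Nonempty := by
    obtain ⟨k, hk⟩ := exists_nat_ge (16 * (2 ^ 15 + 2) : ℝ)
    have hle : pIdx k ≤ pIdx (k + 1) - 1 := by
      have hpos : 0 < 2 ^ (2 * (k + 1)) := by positivity
      rw [pIdx_succ]
      omega
    refine ⟨2 * (k + 1), Int.lt_iff_add_one_le.2 (Int.le_floor.2 ?_)⟩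
    rw [Nat.mul_div_cancel_left _ two_pos]
    push_cast
    linarith [(le_logSum_pIdx k).trans (logSum_mono hle)]
  have mTilde_zero : mTilde 0 = -2 ^ 15 := by
    norm_num [mTilde, pIdx, logSum]
  refine Nat.pos_of_ne_zero fun h => ?_
  have hmem := Nat.sInf_mem exists_mTilde
  rw [← m₀, h, Set.mem_ofPred_eq, mTilde_zero] at hmem
  norm_num at hmem

/-! ### Mixed logarithmic means of tensor products -/

lemma integral_finset_prod_pi {𝕜 ι : Type*} [RCLike 𝕜] [Fintype ι] {α : ι → Type*}
    [∀ i, MeasurableSpace (α i)] (μ : ∀ i, Measure (α i)) [∀ i, IsProbabilityMeasure (μ i)]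
    (s : Finset ι) (f : ∀ i, α i → 𝕜) :
    ∫ x, ∏ i ∈ s, f i (x i) ∂Measure.pi μ = ∏ i ∈ s, ∫ x, f i x ∂μ i := by
  classical
  let g (i : ι) : α i → 𝕜 := if i ∈ s then f i else 1
  have prod_g (x : ∀ i, α i) : ∏ i ∈ s, f i (x i) = ∏ i, g i (x i) := by
    simp [g, ite_apply, Finset.prod_ite_mem]
  have prod_integral_g : ∏ i ∈ s, ∫ x, f i x ∂μ i = ∏ i, ∫ x, g i x ∂μ i := by
    rw [← Finset.univ_inter s, ← Finset.prod_ite_mem]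
    refine Finset.prod_congr rfl fun i _ => ?_
    by_cases hi : i ∈ s <;> simp [g, hi]
  simp only [prod_g, prod_integral_g]
  exact integral_fintype_prod_eq_prod g

section MixedLogMean

variable {d : ℕ}

lemma cubeMeasure_eq_pi : cubeMeasure d = Measure.pi fun _ => unitMeasure := by
  rw [cubeMeasure, unitCube, volume_pi, Measure.restrict_pi_pi]
  rfl

instance : IsProbabilityMeasure (cubeMeasure d) := by
  rw [cubeMeasure_eq_pi]
  infer_instance

lemma integral_cube_finset_prod (s : Finset (Fin d)) (f : Fin d → ℝ → ℝ) :
    ∫ x, ∏ i ∈ s, f i (x i) ∂cubeMeasure d = ∏ i ∈ s, ∫ x, f i x ∂unitMeasure := by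
  rw [cubeMeasure_eq_pi]
  exact integral_finset_prod_pi _ s f

/-- The `N`-th partial sum of the one-dimensional Walsh–Fourier series of `g`, into which
`rectPartialSum` factors on tensor products. -/
def walshPartialSum (g : ℝ → ℝ) (N : ℕ) (x : ℝ) : ℝ :=
  ∑ k ∈ Finset.range N, (∫ y, g y * walsh k y ∂unitMeasure) * walsh k x

lemma walshPartialSum_dirichletKernel_two_pow {m N : ℕ} (hN : N ≤ 2 ^ m) (x : ℝ) :
    walshPartialSum (dirichletKernel (2 ^ m)) N x = dirichletKernel N x := by
  refine Finset.sum_congr rfl fun k hk => ?_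
  have hk_lt := (Finset.mem_range.1 hk).trans_le hN
  simp only [mul_comm (dirichletKernel _ _), walsh_mul_dirichletKernel_two_pow hk_lt]
  rw [integral_dirichletKernel (by positivity), one_mul]

lemma walshPartialSum_one {N : ℕ} (hN : N ≠ 0) (x : ℝ) :
    walshPartialSum 1 N x = 1 := by
  rw [walshPartialSum, Finset.sum_eq_single_of_mem 0 (Finset.mem_range.2 (Nat.pos_of_ne_zero hN))]
  · simp [walsh_zero]
  · intro k _ hk
    simp [integral_walsh hk]

lemma walshCoef_prod (g : Fin d → ℝ → ℝ) (j : Fin d → ℕ) :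
    walshCoef (fun x => ∏ i, g i (x i)) j = ∏ i, ∫ y, g i y * walsh (j i) y ∂unitMeasure := by
  simp only [walshCoef, ← Finset.prod_mul_distrib]
  exact integral_cube_finset_prod _ fun i y => g i y * walsh (j i) y

lemma rectPartialSum_prod (g : Fin d → ℝ → ℝ) (N : Fin d → ℕ) (x : Fin d → ℝ) :
    rectPartialSum (fun x => ∏ i, g i (x i)) N x = ∏ i, walshPartialSum (g i) (N i) (x i) := by
  simp only [rectPartialSum, walshPartialSum, walshCoef_prod, ← Finset.prod_mul_distrib,
    Finset.prod_univ_sum]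

lemma mixedLogMean_prod (B : Finset (Fin d)) (g : Fin d → ℝ → ℝ) (n : Fin d → ℕ)
    (x : Fin d → ℝ) :
    mixedLogMean B (fun x => ∏ j, g j (x j)) n x
      = ∏ j, (∑ i ∈ Finset.Ico 1 (n j),
          walshPartialSum (g j) (if j ∈ B then n j - i else i) (x j) / i) / logSum (n j) := by
  simp only [mixedLogMean, rectPartialSum_prod, ← Finset.prod_div_distrib]
  rw [Finset.prod_div_distrib, Finset.prod_univ_sum, inv_mul_eq_div]

lemma mixedLogMean_const_mul (B : Finset (Fin d)) (c : ℝ) (f : (Fin d → ℝ) → ℝ)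
    (n : Fin d → ℕ) (x : Fin d → ℝ) :
    mixedLogMean B (fun x => c * f x) n x = c * mixedLogMean B f n x := by
  simp only [mixedLogMean, rectPartialSum, walshCoef, mul_assoc, integral_const_mul,
    ← Finset.mul_sum, mul_div_assoc]
  exact mul_left_comm _ _ _

/-- The tensor product of the dyadic Dirichlet kernels `D_{2^m}` in the variables from `B`, the
extremal function for the mixed logarithmic means. -/
def dirichletTensor (B : Finset (Fin d)) (m : ℕ) (x : Fin d → ℝ) : ℝ :=
  ∏ j ∈ B, dirichletKernel (2 ^ m) (x j)

variable (B : Finset (Fin d)) (m : ℕ)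

lemma measurable_dirichletTensor : Measurable (dirichletTensor B m) :=
  Finset.measurable_fun_prod _ fun j _ =>
    (measurable_dirichletKernel _).comp (measurable_pi_apply j)

lemma dirichletTensor_nonneg (x : Fin d → ℝ) : 0 ≤ dirichletTensor B m x :=
  Finset.prod_nonneg fun j _ => dirichletKernel_two_pow_nonneg m (x j)

lemma dirichletTensor_le (x : Fin d → ℝ) : dirichletTensor B m x ≤ (2 ^ m) ^ B.card := by
  rw [← Finset.prod_const]
  refine Finset.prod_le_prod (fun j _ => dirichletKernel_two_pow_nonneg m (x j)) fun j _ => ?_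
  exact (le_abs_self _).trans (by exact_mod_cast abs_dirichletKernel_le (2 ^ m) (x j))

lemma integral_dirichletTensor : ∫ x, dirichletTensor B m x ∂cubeMeasure d = 1 := by
  refine (integral_cube_finset_prod B fun _ => dirichletKernel (2 ^ m)).trans ?_
  exact Finset.prod_eq_one fun _ _ => integral_dirichletKernel (by positivity)

variable {B m}

lemma mixedLogMean_dirichletTensor {n : Fin d → ℕ} (hn : ∀ j, 2 ≤ n j)
    (hnB : ∀ j ∈ B, n j ≤ 2 ^ m) (x : Fin d → ℝ) :
    mixedLogMean B (dirichletTensor B m) n x = ∏ j ∈ B, FKernel (n j) (x j) := by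
  let g (j : Fin d) : ℝ → ℝ := if j ∈ B then dirichletKernel (2 ^ m) else 1
  have tensor_eq : dirichletTensor B m = fun x => ∏ j, g j (x j) := by
    funext x
    simp [dirichletTensor, g, ite_apply, Finset.prod_ite_mem]
  rw [tensor_eq, mixedLogMean_prod, ← Finset.univ_inter B, ← Finset.prod_ite_mem,
    Finset.univ_inter]
  refine Finset.prod_congr rfl fun j _ => ?_
  by_cases hj : j ∈ B
  · simp only [g, if_pos hj, FKernel_eq_div, norlundSum]
    congr 1
    refine Finset.sum_congr rfl fun i _ => ?_
    rw [walshPartialSum_dirichletKernel_two_pow ((Nat.sub_le _ _).trans (hnB j hj))]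
  · simp only [g, if_neg hj]
    rw [div_eq_one_iff_eq (logSum_pos (hn j)).ne', logSum_eq_sum_Ico]
    refine Finset.sum_congr rfl fun i hi => ?_
    rw [walshPartialSum_one (Nat.one_le_iff_ne_zero.1 (Finset.mem_Ico.1 hi).1)]

lemma integral_abs_mixedLogMean_dirichletTensor {n : Fin d → ℕ} (hn : ∀ j, 2 ≤ n j)
    (hnB : ∀ j ∈ B, n j ≤ 2 ^ m) :
    ∫ x, |mixedLogMean B (dirichletTensor B m) n x| ∂cubeMeasure d
      = ∏ j ∈ B, ∫ x, |FKernel (n j) x| ∂unitMeasure := by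
  simp only [mixedLogMean_dirichletTensor hn hnB, Finset.abs_prod]
  exact integral_cube_finset_prod B fun j x => |FKernel (n j) x|

end MixedLogMean

/-! ### Luxemburg norms of bounded functions -/

section Orlicz

variable {d : ℕ}

lemma YoungFunction.apply_mul_le (Q : YoungFunction) {s : ℝ} (hs₀ : 0 ≤ s) (hs₁ : s ≤ 1) (u : ℝ) :
    Q.toFun (s * u) ≤ s * Q.toFun u := by
  simpa [Q.map_zero] using
    Q.convexOn.2 (Set.mem_univ u) (Set.mem_univ 0) hs₀ (sub_nonneg.2 hs₁) (add_sub_cancel s 1)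

lemma one_mem_orliczSet_of_abs_le (Q : YoungFunction) {M : ℝ} (hM : 0 < M) (hQ : M ≤ Q.toFun M)
    {h : (Fin d → ℝ) → ℝ} (hmeas : Measurable h) (hbound : ∀ x, |h x| ≤ M)
    (hint : ∫ x, |h x| ∂cubeMeasure d ≤ 1) :
    1 ∈ orliczSet Q fun x => M / Q.toFun M * h x := by
  have hQM : 0 < Q.toFun M := hM.trans_le hQ
  have Q_le (x : Fin d → ℝ) : Q.toFun (|M / Q.toFun M * h x| / 1) ≤ |h x| :=
    calc Q.toFun (|M / Q.toFun M * h x| / 1) = Q.toFun (|h x| / Q.toFun M * M) := by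
          rw [div_one, abs_mul, abs_of_pos (div_pos hM hQM)]
          ring_nf
      _ ≤ |h x| / Q.toFun M * Q.toFun M :=
          Q.apply_mul_le (by positivity) ((div_le_one hQM).2 ((hbound x).trans hQ)) M
      _ = |h x| := div_mul_cancel₀ _ hQM.ne'
  have h_int : Integrable (fun x => |h x|) (cubeMeasure d) :=
    .abs (.of_bound hmeas.aestronglyMeasurable M (.of_forall hbound))
  have Q_meas : Measurable fun x => Q.toFun (|M / Q.toFun M * h x| / 1) :=
    Q.continuous.measurable.comp (by fun_prop)
  have Q_int : Integrable (fun x => Q.toFun (|M / Q.toFun M * h x| / 1)) (cubeMeasure d) :=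
    h_int.mono' Q_meas.aestronglyMeasurable (.of_forall fun x => by
      rw [Real.norm_of_nonneg (Q.nonneg _)]
      exact Q_le x)
  exact ⟨one_pos, Q_int, (integral_mono Q_int h_int Q_le).trans hint⟩

lemma orliczNorm_le_of_mem {Q : YoungFunction} {f : (Fin d → ℝ) → ℝ} {k : ℝ}
    (hk : k ∈ orliczSet Q f) : orliczNorm Q f ≤ k :=
  csInf_le ⟨0, fun _ hk' => hk'.1.le⟩ hk

end Orlicz

/-! ### The operator norm of the mixed logarithmic means -/

lemma pow_le_integral_abs_mixedLogMean_dirichletTensor {d : ℕ} (B : Finset (Fin d)) {n : ℕ}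
    (hn : 1 ≤ n) :
    (n / 121 : ℝ) ^ B.card
      ≤ ∫ x, |mixedLogMean B (dirichletTensor B (2 * n + 1)) (fun _ => pIdx n) x|
          ∂cubeMeasure d := by
  rw [integral_abs_mixedLogMean_dirichletTensor (fun _ => two_le_pIdx hn)
    fun _ _ => pIdx_le_two_pow n, Finset.prod_const]
  gcongr
  exact div_le_integral_abs_FKernel_pIdx hn

theorem stmt15_general {d : ℕ} (B : Finset (Fin d)) (Q : YoungFunction) {n : ℕ} (hn : 1 ≤ n)
    (hQ : (2 : ℝ) ^ (2 * n * B.card) ≤ Q.toFun (2 ^ (2 * n * B.card))) :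
    ∃ f : (Fin d → ℝ) → ℝ, MemOrlicz Q f ∧ orliczNorm Q f ≤ 1 ∧
      (1 / 242) ^ B.card * 2 ^ (2 * n * B.card) * (n : ℝ) ^ B.card
          / Q.toFun (2 ^ (2 * n * B.card))
        ≤ ∫ x, |mixedLogMean B f (fun _ => pIdx n) x| ∂(cubeMeasure d) := by
  set M : ℝ := 2 ^ (2 * n * B.card)
  have hM : 0 < M := by positivity
  have hratio : 0 < M / Q.toFun M := div_pos hM (hM.trans_le hQ)
  let h (x : Fin d → ℝ) : ℝ := (1 / 2) ^ B.card * dirichletTensor B (2 * n + 1) x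
  have h_abs (x : Fin d → ℝ) : |h x| = h x :=
    abs_of_nonneg (mul_nonneg (by positivity) (dirichletTensor_nonneg B _ x))
  have h_le (x : Fin d → ℝ) : |h x| ≤ M :=
    calc |h x| ≤ (1 / 2) ^ B.card * (2 ^ (2 * n + 1)) ^ B.card := by
          rw [h_abs]
          exact mul_le_mul_of_nonneg_left (dirichletTensor_le B _ x) (by positivity)
      _ = M := by rw [← mul_pow, pow_succ, mul_left_comm]; norm_num [M, pow_mul]
  have h_integral : ∫ x, |h x| ∂cubeMeasure d ≤ 1 := by
    simp only [h_abs, h, integral_const_mul, integral_dirichletTensor, mul_one]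
    exact pow_le_one₀ (by norm_num) (by norm_num)
  have h_meas : Measurable h := (measurable_dirichletTensor B _).const_mul _
  have hone := one_mem_orliczSet_of_abs_le Q hM hQ h_meas h_le h_integral
  refine ⟨_, ⟨h_meas.const_mul _, 1, hone⟩, orliczNorm_le_of_mem hone, ?_⟩
  calc (1 / 242) ^ B.card * M * (n : ℝ) ^ B.card / Q.toFun M
      = M / Q.toFun M * ((1 / 2) ^ B.card * (n / 121 : ℝ) ^ B.card) := by
        rw [← mul_pow, show (1 / 2 * (n / 121) : ℝ) = 1 / 242 * n by ring, mul_pow]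
        ring
    _ ≤ M / Q.toFun M * ((1 / 2) ^ B.card *
          ∫ x, |mixedLogMean B (dirichletTensor B (2 * n + 1)) (fun _ => pIdx n) x|
            ∂cubeMeasure d) := by
        gcongr
        exact pow_le_integral_abs_mixedLogMean_dirichletTensor B hn
    _ = _ := by
        simp only [h, mixedLogMean_const_mul, abs_mul, integral_const_mul, abs_of_pos hratio]
        rw [abs_of_pos (by positivity)]

/-- operator-norm lower bound: for every Young function `Q` and `n ≥ m₀`
with `Q(2^{2n|B|}) ≥ 2^{2n|B|}`, the norm of `L_{p_n(B)} ∘ R_{p_n(B')}` from `L_Q(I^d)` to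
`L^1(I^d)` is at least `c · 2^{2n|B|} n^{|B|} / Q(2^{2n|B|})`. -/
theorem stmt15 (d : ℕ) (hd : 1 ≤ d) (B : Finset (Fin d)) (hB : B.Nonempty) :
    ∃ c > (0:ℝ), ∀ Q : YoungFunction, ∀ n : ℕ, m₀ ≤ n →
      (2 : ℝ) ^ (2 * n * B.card) ≤ Q.toFun (2 ^ (2 * n * B.card)) →
      ∀ ε > (0:ℝ), ∃ f : (Fin d → ℝ) → ℝ, MemOrlicz Q f ∧ orliczNorm Q f ≤ 1 ∧
        c * 2 ^ (2 * n * B.card) * (n : ℝ) ^ B.card / Q.toFun (2 ^ (2 * n * B.card)) - ε <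
          ∫ x, |mixedLogMean B f (fun _ => pIdx n) x| ∂(cubeMeasure d) := by
  refine ⟨(1 / 242) ^ B.card, by positivity, fun Q n hn hQ ε hε => ?_⟩
  obtain ⟨f, hf, hf_norm, hf_int⟩ := stmt15_general B Q (m₀_pos.trans_le hn) hQ
  exact ⟨f, hf, hf_norm, (sub_lt_self _ hε).trans_le hf_int⟩

end
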